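/- For every integer l ≥ 7 there exists a prime number p such that (l+1)/2 < p ≤ l and p ≡ 3 (mod 4); equivalently, l + 1 < 2p, p ≤ l, and p ≡ 3 (mod 4). -/

import Mathlib

/-!
The argument is a Chebyshev-type estimate in residue classes. For `a = 1, 3` let
`T_a(n) = ∑ log k` over `k ≤ n`, `k ≡ a (mod 4)`. Writing `log k = ∑_{d ∣ k} Λ(d)` turns the
combination
`F(n) = T_3(n) - T_3(n/2) - T_1(n/3) - T_3(n/4) + T_1(n/12)`
into `∑ Λ(d) w(d)`, where `w(d)` depends only on `⌊n/d⌋` and `d mod 4`. Since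
`1 - 1/2 - 1/3 - 1/4 + 1/12 = 0`, `w` is periodic in `⌊n/d⌋` with period 48, and a finite
inspection (`weight_le`) shows that `w(d) ≤ 0` except that `w(d) ≤ 1` when `d ≡ 3 (mod 4)` and
`⌊n/d⌋ = 1`, or when `⌊n/d⌋ ≥ 11`. If no prime `p ≡ 3 (mod 4)` lies in `(n/2, n]`, only proper prime
powers contribute to the first exception, so `F(n) ≤ (ψ(n) - θ(n)) + ψ(n/11)`
(`logSum_comb_le`), which Chebyshev's bounds in Mathlib make at most
`(log 4 / 11) n + O(√n log n) ≈ 0.126 n`.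

On the other hand `T_a(n) = (n/4)(log n - 1) + O(log n)` (`logSum_bounds`), so the `n log n` terms
of `F(n)` cancel and `F(n) = (n/4)(5/6 log 2 + 1/4 log 3) + O(log n) ≈ 0.213 n`. With the explicit
error terms this is a contradiction for `n ≥ 10^6`. Below that, a chain of primes congruent to
3 mod 4, each less than twice its predecessor, suffices.
-/

section

open Finset ArithmeticFunction

/-- If multiplication by `d` carries exactly the class `b` mod 4 to the class `a`, the multiples
`d * e ≤ n` in the class `a` correspond to the `e ≤ n / d` in the class `b`. -/
lemma card_mul_mod (d a b : ℕ) (hb : b = 1 ∨ b = 3)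
    (h : ∀ e, (d * e) % 4 = a ↔ e % 4 = b) (n : ℕ) :
    #{k ∈ Ioc 0 n | k % 4 = a ∧ d ∣ k} = (n / d + 4 - b) / 4 := by
  induction n with
  | zero => rcases hb with rfl | rfl <;> simp
  | succ n ih =>
    rw [← Finset.insert_Ioc_right_eq_Ioc_add_one (Nat.zero_le n), Finset.filter_insert, Nat.succ_div]
    by_cases hd : d ∣ n + 1
    · have he := h ((n + 1) / d)
      rw [Nat.mul_div_cancel' hd, Nat.succ_div, if_pos hd] at he
      by_cases hm : (n + 1) % 4 = a
      · rw [if_pos ⟨hm, hd⟩, card_insert_of_notMem (by simp), ih, if_pos hd]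
        have := he.1 hm
        generalize n / d = q at *
        omega
      · rw [if_neg (fun h => hm h.1), ih, if_pos hd]
        have := mt he.2 hm
        generalize n / d = q at *
        omega
    · rw [if_neg (fun h => hd h.2), ih, if_neg hd, add_zero]

/-- The sum of `log k` over the positive integers `k ≤ n` with `k ≡ a (mod 4)`, for `a < 4`. -/
noncomputable def logSum (a n : ℕ) : ℝ := ∑ k ∈ Ioc 0 n with k % 4 = a, Real.log k

/-- The expansion `log k = ∑_{d ∣ k} Λ(d)` summed over a residue class. The range of `d` is allowed
to exceed `n`, so that several such sums can be combined termwise. -/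
lemma logSum_eq (a : ℕ) {n N : ℕ} (hn : n ≤ N) :
    logSum a n = ∑ d ∈ Ioc 0 N, (vonMangoldt d) * (#{k ∈ Ioc 0 n | k % 4 = a ∧ d ∣ k} : ℝ) := by
  have h1 : ∀ k ∈ (Ioc 0 n).filter (fun k => k % 4 = a),
      Real.log k = ∑ d ∈ Ioc 0 N, if d ∣ k then vonMangoldt d else 0 := by
    intro k hk
    simp only [mem_filter, mem_Ioc] at hk
    rw [← vonMangoldt_sum, ← Finset.sum_filter]
    apply Finset.sum_congr _ (fun _ _ => rfl)
    ext d
    simp only [Nat.mem_divisors, mem_filter, mem_Ioc]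
    constructor
    · rintro ⟨h, h0⟩
      exact ⟨⟨Nat.pos_of_dvd_of_pos h hk.1.1, (Nat.le_of_dvd hk.1.1 h).trans (hk.1.2.trans hn)⟩, h⟩
    · rintro ⟨_, h⟩
      exact ⟨h, by omega⟩
  rw [logSum, Finset.sum_congr rfl h1, Finset.sum_comm]
  refine Finset.sum_congr rfl fun d _ => ?_
  rw [← Finset.sum_filter, Finset.filter_filter, Finset.sum_const, nsmul_eq_mul, mul_comm]

/-- The coefficient of `Λ(d)` in
`T_3(n) - T_3(n/2) - T_1(n/3) - T_3(n/4) + T_1(n/12)`, where `T_a = logSum a`. -/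
def weight (n d : ℕ) : ℤ :=
  #{k ∈ Ioc 0 n | k % 4 = 3 ∧ d ∣ k} - #{k ∈ Ioc 0 (n / 2) | k % 4 = 3 ∧ d ∣ k}
    - #{k ∈ Ioc 0 (n / 3) | k % 4 = 1 ∧ d ∣ k} - #{k ∈ Ioc 0 (n / 4) | k % 4 = 3 ∧ d ∣ k}
    + #{k ∈ Ioc 0 (n / 12) | k % 4 = 1 ∧ d ∣ k}

/-- The bound on the weight of `d ≡ 1 (mod 4)`, with `q = ⌊n/d⌋`. The difference of the two sides
without the indicator has period 48 in `q`. -/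
lemma mod_four_weight_one (q : ℕ) :
    (q + 1) / 4 + (q / 12 + 3) / 4 ≤
      (q / 2 + 1) / 4 + (q / 3 + 3) / 4 + (q / 4 + 1) / 4 + if 11 ≤ q then 1 else 0 := by
  obtain ⟨c, b, hb, rfl⟩ : ∃ c b, b < 48 ∧ q = 48 * c + b :=
    ⟨q / 48, q % 48, by omega, by omega⟩
  split_ifs <;> interval_cases b <;> omega

/-- The bound on the weight of `d ≡ 3 (mod 4)`, with `q = ⌊n/d⌋`; multiplication by `d` swaps the
classes 1 and 3. -/
lemma mod_four_weight_three (q : ℕ) :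
    (q + 3) / 4 + (q / 12 + 1) / 4 ≤ (q / 2 + 3) / 4 + (q / 3 + 1) / 4 + (q / 4 + 3) / 4 +
      ((if q = 1 then 1 else 0) + if 11 ≤ q then 1 else 0) := by
  obtain ⟨c, b, hb, rfl⟩ : ∃ c b, b < 48 ∧ q = 48 * c + b :=
    ⟨q / 48, q % 48, by omega, by omega⟩
  split_ifs <;> interval_cases b <;> omega

lemma weight_le (n d : ℕ) :
    weight n d ≤ (if d % 4 = 3 ∧ n / d = 1 then 1 else 0) + (if 11 ≤ n / d then 1 else 0) := by
  have comm (i : ℕ) : n / i / d = n / d / i := by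
    rw [Nat.div_div_eq_div_mul, Nat.div_div_eq_div_mul, mul_comm]
  have hd : d % 4 = 0 ∨ d % 4 = 1 ∨ d % 4 = 2 ∨ d % 4 = 3 := by omega
  obtain ⟨q, hq⟩ : ∃ q, q = n / d := ⟨_, rfl⟩
  have aux (a b : ℕ) (hb : b = 1 ∨ b = 3) (h : (d * b) % 4 = a) (h2 : d % 2 = 1) :
      ∀ e, (d * e) % 4 = a ↔ e % 4 = b := by
    intro e
    subst h
    have h4 : e % 4 = 0 ∨ e % 4 = 1 ∨ e % 4 = 2 ∨ e % 4 = 3 := by omega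
    have : d % 4 = 1 ∨ d % 4 = 3 := by omega
    rcases hb with rfl | rfl <;> rcases this with h | h <;>
      rcases h4 with h' | h' | h' | h' <;> simp [Nat.mul_mod, h, h']
  have even (a m : ℕ) (ha : a % 2 = 1) (h2 : d % 2 = 0) :
      #{k ∈ Ioc 0 m | k % 4 = a ∧ d ∣ k} = 0 := by
    rw [card_eq_zero, filter_eq_empty_iff]
    rintro k - ⟨hk, hdk⟩
    have := (Nat.dvd_of_mod_eq_zero h2).trans hdk
    omega
  have e1 (m : ℕ) : m + 4 - 3 = m + 1 := by omega
  have e3 (m : ℕ) : m + 4 - 1 = m + 3 := by omega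
  unfold weight
  rcases hd with hd | hd | hd | hd
  · simp only [even 3 _ rfl (by omega), even 1 _ rfl (by omega)]
    split_ifs <;> simp
  · simp only [card_mul_mod d 3 3 (.inr rfl) (aux 3 3 (.inr rfl) (by omega) (by omega)),
      card_mul_mod d 1 1 (.inl rfl) (aux 1 1 (.inl rfl) (by omega) (by omega)), comm, ← hq, hd, e1, e3]
    have := mod_four_weight_one q
    simp only [show ¬ (1 = 3) by norm_num, false_and, if_false]
    split_ifs at * <;> omega
  · simp only [even 3 _ rfl (by omega), even 1 _ rfl (by omega)]
    split_ifs <;> simp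
  · simp only [card_mul_mod d 3 1 (.inl rfl) (aux 3 1 (.inl rfl) (by omega) (by omega)),
      card_mul_mod d 1 3 (.inr rfl) (aux 1 3 (.inr rfl) (by omega) (by omega)), comm, ← hq, hd, e1, e3]
    have := mod_four_weight_three q
    simp only [true_and]
    split_ifs at * <;> omega

lemma logSum_succ (a n : ℕ) :
    logSum a (n + 1) = logSum a n + if (n + 1) % 4 = a then Real.log ((n : ℝ) + 1) else 0 := by
  rw [logSum, ← Finset.insert_Ioc_right_eq_Ioc_add_one (Nat.zero_le n), Finset.filter_insert]
  split_ifs with h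
  · rw [sum_insert (by simp), add_comm]
    simp [logSum]
  · simp [logSum]

lemma logSum_add_four {a : ℕ} (ha : a < 4) (n : ℕ) :
    logSum a n + Real.log (n + 1) ≤ logSum a (n + 4) ∧
      logSum a (n + 4) ≤ logSum a n + Real.log (n + 4) := by
  have h1 : Real.log ((n : ℝ) + 1) ≤ Real.log (n + 2) := by gcongr; norm_num
  have h2 : Real.log ((n : ℝ) + 2) ≤ Real.log (n + 3) := by gcongr; norm_num
  have h3 : Real.log ((n : ℝ) + 3) ≤ Real.log (n + 4) := by gcongr; norm_num
  have e : logSum a (n + 4) = logSum a (n + 1 + 1 + 1 + 1) := rfl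
  rw [e, logSum_succ, logSum_succ, logSum_succ, logSum_succ]
  push_cast
  rw [show (n : ℝ) + 1 + 1 = n + 2 by ring, show (n : ℝ) + 2 + 1 = n + 3 by ring,
    show (n : ℝ) + 3 + 1 = n + 4 by ring]
  split_ifs <;> first | omega | (constructor <;> linarith)

/-- Stirling-type bounds for a residue class mod 4. From `n` to `n + 4` the sum gains one logarithm
between `log (n + 1)` and `log (n + 4)`, while `(x / 4) (log x - 1)`, whose derivative is
`(log x) / 4`, gains between `log n` and `log (n + 4)`. The difference is absorbed by the increment
of the error term `log n`. -/
lemma logSum_bounds {a : ℕ} (ha : a = 1 ∨ a = 3) {n : ℕ} (hn : 1 ≤ n) :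
    (n : ℝ) / 4 * (Real.log n - 1) - Real.log n - 1 ≤ logSum a n ∧
      logSum a n ≤ (n : ℝ) / 4 * (Real.log n - 1) + Real.log n + 1 := by
  induction n using Nat.strong_induction_on with
  | _ n ih =>
    rcases le_or_gt n 4 with h | h
    · have l2 : 0 ≤ Real.log 2 := Real.log_nonneg (by norm_num)
      have l3 : 0 ≤ Real.log 3 := Real.log_nonneg (by norm_num)
      have l34 : Real.log 3 ≤ Real.log 4 := Real.log_le_log (by norm_num) (by norm_num)
      have h0 (a : ℕ) : logSum a 0 = 0 := by simp [logSum]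
      have h1 (a : ℕ) : logSum a 1 = 0 := by simp [logSum_succ a 0, h0]
      have h2 (a : ℕ) := logSum_succ a 1
      have h3 (a : ℕ) := logSum_succ a 2
      have h4 (a : ℕ) := logSum_succ a 3
      norm_num at h2 h3 h4
      rcases ha with rfl | rfl <;> interval_cases n <;>
        simp only [h1, h2, h3, h4] <;> refine ⟨?_, ?_⟩ <;> norm_num <;> linarith
    · obtain ⟨m, rfl⟩ : ∃ m, n = m + 4 := ⟨n - 4, by omega⟩
      obtain ⟨i1, i2⟩ := ih m (by omega) (by omega)
      obtain ⟨s1, s2⟩ := logSum_add_four (a := a) (by omega) m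
      have hm : (0 : ℝ) < m := by exact_mod_cast (by omega : 0 < m)
      have hm1 : Real.log m ≤ Real.log (m + 1) := by gcongr; norm_num
      have e : Real.log ((m + 4) / m) = Real.log (m + 4) - Real.log m :=
        Real.log_div (by positivity) (by positivity)
      have u1 := Real.log_le_sub_one_of_pos (x := ((m : ℝ) + 4) / m) (by positivity)
      have u2 := Real.one_sub_inv_le_log_of_pos (x := ((m : ℝ) + 4) / m) (by positivity)
      rw [e] at u1 u2
      have v1 : (m : ℝ) * (Real.log (m + 4) - Real.log m) ≤ 4 := by
        calc _ ≤ (m : ℝ) * ((m + 4) / m - 1) := by gcongr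
          _ = 4 := by field_simp; ring
      have v2 : 4 ≤ ((m : ℝ) + 4) * (Real.log (m + 4) - Real.log m) := by
        calc (4 : ℝ) = ((m : ℝ) + 4) * (1 - (((m : ℝ) + 4) / m)⁻¹) := by field_simp; ring
          _ ≤ _ := by gcongr
      push_cast
      constructor <;> linarith

lemma logSum_div_le {a : ℕ} (ha : a = 1 ∨ a = 3) {n i : ℕ} (hi : 1 ≤ i) (hn : 3 * i ≤ n) :
    logSum a (n / i) ≤ (n : ℝ) / i / 4 * (Real.log n - Real.log i - 1) + Real.log n + 1 := by
  have hm : 3 ≤ n / i := (Nat.le_div_iff_mul_le hi).2 hn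
  have hm' : (3 : ℝ) ≤ (n / i : ℕ) := by exact_mod_cast hm
  have hle : ((n / i : ℕ) : ℝ) ≤ (n : ℝ) / i := Nat.cast_div_le
  have hi' : (1 : ℝ) ≤ i := by exact_mod_cast hi
  have hn0 : (0 : ℝ) < n := by exact_mod_cast (by omega : 0 < n)
  have hlog : Real.log (n / i : ℕ) ≤ Real.log n - Real.log i := by
    rw [← Real.log_div (by positivity) (by positivity)]
    exact Real.log_le_log (by linarith) hle
  have h1 : 1 ≤ Real.log (n / i : ℕ) := by
    rw [Real.le_log_iff_exp_le (by linarith)]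
    linarith [Real.exp_one_lt_d9]
  have hi0 := Real.log_nonneg hi'
  have := (logSum_bounds ha (by omega : 1 ≤ n / i)).2
  have : ((n / i : ℕ) : ℝ) / 4 * (Real.log (n / i : ℕ) - 1) ≤
      (n : ℝ) / i / 4 * (Real.log n - Real.log i - 1) := by
    gcongr
  linarith

lemma le_logSum_div {a : ℕ} (ha : a = 1 ∨ a = 3) {n i : ℕ} (hi : 1 ≤ i) (hn : i ≤ n) :
    (n : ℝ) / i / 4 * (Real.log n - Real.log i - 1) - 2 * Real.log n - 1 ≤ logSum a (n / i) := by
  have hm : 1 ≤ n / i := (Nat.le_div_iff_mul_le hi).2 (by omega)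
  have hb := (logSum_bounds ha hm).1
  have hm' : (1 : ℝ) ≤ (n / i : ℕ) := by exact_mod_cast hm
  have hle : ((n / i : ℕ) : ℝ) ≤ (n : ℝ) / i := Nat.cast_div_le
  have hge : (n : ℝ) / i - 1 ≤ (n / i : ℕ) := (Nat.sub_one_lt_floor _).le.trans_eq (by
    rw [Nat.floor_div_eq_div])
  have hi' : (1 : ℝ) ≤ i := by exact_mod_cast hi
  have hn0 : (0 : ℝ) < n := by exact_mod_cast (by omega : 0 < n)
  have hi0 := Real.log_nonneg hi'
  rw [← Real.log_div (by positivity) (by positivity)]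
  have hlogle : Real.log ((n : ℝ) / i) ≤ Real.log n := by
    rw [Real.log_div (by positivity) (by positivity)]; linarith
  set y := (n : ℝ) / i
  set m := ((n / i : ℕ) : ℝ)
  have hy : 0 ≤ Real.log y := Real.log_nonneg (by linarith)
  have hmy : Real.log m ≤ Real.log y := Real.log_le_log (by linarith) hle
  have u := Real.log_le_sub_one_of_pos (x := y / m) (by positivity)
  rw [Real.log_div (by linarith) (by linarith)] at u
  -- Concavity of `log` controls the loss from replacing `y` by its integer part `m`.
  have v : m * (Real.log y - Real.log m) ≤ y - m := by
    calc _ ≤ m * (y / m - 1) := by gcongr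
      _ = y - m := by field_simp
  have w := mul_le_mul_of_nonneg_right hge hy
  linarith

/-- If every prime `p ≡ 3 (mod 4)` up to `n` is at most `n / 2`, the `d` of weight 1 with
`⌊n/d⌋ = 1` contribute only through non-primes, whose total `Λ`-mass up to `n` is `ψ(n) - θ(n)`;
those with `⌊n/d⌋ ≥ 11` contribute at most `ψ(n/11)`. -/
lemma logSum_comb_le {n : ℕ}
    (hp : ∀ p : ℕ, p.Prime → p % 4 = 3 → p ≤ n → 2 * p ≤ n) :
    logSum 3 n - logSum 3 (n / 2) - logSum 1 (n / 3) - logSum 3 (n / 4) + logSum 1 (n / 12) ≤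
      (Chebyshev.psi n - Chebyshev.theta n) + Chebyshev.psi (n / 11 : ℕ) := by
  rw [Chebyshev.psi_sub_theta_eq_sum_not_prime, Chebyshev.psi, Nat.floor_natCast,
    Nat.floor_natCast, logSum_eq 3 le_rfl, logSum_eq 3 (Nat.div_le_self n 2),
    logSum_eq 1 (Nat.div_le_self n 3), logSum_eq 3 (Nat.div_le_self n 4),
    logSum_eq 1 (Nat.div_le_self n 12)]
  have e : Ioc 0 (n / 11) = {d ∈ Ioc 0 n | 11 ≤ n / d} := by
    ext d
    simp only [mem_filter, mem_Ioc]
    constructor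
    · rintro ⟨h0, h⟩
      refine ⟨⟨h0, h.trans (Nat.div_le_self n 11)⟩, ?_⟩
      rw [Nat.le_div_iff_mul_le h0]
      omega
    · rintro ⟨⟨h0, _⟩, h⟩
      rw [Nat.le_div_iff_mul_le h0] at h
      exact ⟨h0, by omega⟩
  rw [e, sum_filter, sum_filter]
  simp only [← sum_sub_distrib, ← sum_add_distrib]
  refine sum_le_sum fun d hd => ?_
  rw [mem_Ioc] at hd
  have hw : ((weight n d : ℤ) : ℝ) ≤
      (if d % 4 = 3 ∧ n / d = 1 then 1 else 0) + (if 11 ≤ n / d then 1 else 0) := by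
    exact_mod_cast weight_le n d
  have hL : 0 ≤ vonMangoldt d := vonMangoldt_nonneg
  calc _ = vonMangoldt d * ((weight n d : ℤ) : ℝ) := by
        rw [weight]; push_cast; ring
    _ ≤ vonMangoldt d * ((if d % 4 = 3 ∧ n / d = 1 then 1 else 0) +
          (if 11 ≤ n / d then 1 else 0)) := by gcongr
    _ ≤ _ := by
      rw [mul_add]
      gcongr
      · by_cases h : d % 4 = 3 ∧ n / d = 1
        · have : ¬ d.Prime := fun hpr => by
            have h2 := hp d hpr h.1 hd.2
            have := (Nat.le_div_iff_mul_le hd.1).2 h2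
            omega
          simp [h, this]
        · rw [if_neg h, mul_zero]
          split_ifs <;> simp
      · split_ifs <;> simp

/-- Comparing the two estimates for the combination of `logSum`s: the main term exceeds
`(log 4 / 11) n` by at least `0.083 n`, which beats `4 √n log n + 7 log n + 5` for `n ≥ 10^6`. -/
lemma exists_prime_of_large {n : ℕ} (hn : 1000000 ≤ n) :
    ∃ p : ℕ, p.Prime ∧ p % 4 = 3 ∧ p ≤ n ∧ n < 2 * p := by
  by_contra! hp
  have hF := logSum_comb_le hp
  have t1 := le_logSum_div (a := 3) (.inr rfl) (i := 1) (n := n) (by norm_num) (by omega)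
  have t2 := logSum_div_le (a := 3) (.inr rfl) (i := 2) (n := n) (by norm_num) (by omega)
  have t3 := logSum_div_le (a := 1) (.inl rfl) (i := 3) (n := n) (by norm_num) (by omega)
  have t4 := logSum_div_le (a := 3) (.inr rfl) (i := 4) (n := n) (by norm_num) (by omega)
  have t12 := le_logSum_div (a := 1) (.inl rfl) (i := 12) (n := n) (by norm_num) (by omega)
  have hx : (1000000 : ℝ) ≤ n := by exact_mod_cast hn
  have p1 := Chebyshev.psi_sub_theta_le (x := n) (by linarith)
  have hm1 : (1 : ℝ) ≤ (n / 11 : ℕ) := by exact_mod_cast (by omega : 1 ≤ n / 11)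
  have p2 := Chebyshev.psi_le hm1
  have hm : ((n / 11 : ℕ) : ℝ) ≤ (n : ℝ) / 11 := Nat.cast_div_le
  have hm2 : ((n / 11 : ℕ) : ℝ) ≤ n := by linarith
  have p3 : √((n / 11 : ℕ) : ℝ) * Real.log (n / 11 : ℕ) ≤ √(n : ℝ) * Real.log n := by
    have := Real.log_nonneg hm1
    gcongr
  have l4 : Real.log 4 = 2 * Real.log 2 := by
    rw [show (4 : ℝ) = 2 ^ 2 by norm_num, Real.log_pow]; norm_num
  have l12 : Real.log 12 = 2 * Real.log 2 + Real.log 3 := by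
    rw [← l4, ← Real.log_mul (by norm_num) (by norm_num)]; norm_num
  have l3 : 3 * Real.log 2 ≤ 2 * Real.log 3 := by
    have h : Real.log ((2 : ℝ) ^ 3) ≤ Real.log (3 ^ 2) :=
      Real.log_le_log (by norm_num) (by norm_num)
    rw [Real.log_pow, Real.log_pow] at h
    exact_mod_cast h
  have l2 := Real.log_two_gt_d9
  have l2' := Real.log_two_lt_d9
  have l1000 : Real.log 1000 ≤ 10 * Real.log 2 := by
    have h : Real.log 1000 ≤ Real.log ((2 : ℝ) ^ 10) :=
      Real.log_le_log (by norm_num) (by norm_num)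
    rw [Real.log_pow] at h
    exact_mod_cast h
  set x := (n : ℝ)
  obtain ⟨s, hs⟩ : ∃ s, s = √x := ⟨_, rfl⟩
  have hsx : s * s = x := by rw [hs]; exact Real.mul_self_sqrt (by linarith)
  have hs1 : 1000 ≤ s := by rw [hs]; exact Real.le_sqrt_of_sq_le (by norm_num; linarith)
  -- The tangent line to `log` at `s = 1000`.
  have hlog : Real.log x ≤ s / 500 + 12 := by
    have h := Real.log_le_sub_one_of_pos (x := s / 1000) (by linarith)
    rw [Real.log_div (by linarith) (by norm_num)] at h
    rw [← hsx, Real.log_mul (by linarith) (by linarith)]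
    linarith
  rw [← hs] at p1 p3
  norm_num at t1 t2 t3 t4 t12
  rw [l4] at t4 p2
  rw [l12] at t12
  have q1 : s * Real.log x ≤ s * (s / 500 + 12) := by gcongr
  have q2 : 2 * Real.log 2 * ((n / 11 : ℕ) : ℝ) ≤ 2 * Real.log 2 * (x / 11) := by gcongr
  have main : x / 4 * (5 / 6 * Real.log 2 + 1 / 4 * Real.log 3) - 7 * Real.log x - 5 ≤
      2 * Real.log 2 * (x / 11) + 4 * (s * Real.log x) := by
    linarith
  have q3 : x * 0.083 ≤ x * (5 / 24 * Real.log 2 + 1 / 16 * Real.log 3 - 2 / 11 * Real.log 2) := by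
    gcongr; linarith
  nlinarith

end


/-- For every `l ≥ 7` there is a prime `p` with `(l+1)/2 < p ≤ l` (that is, `l + 1 < 2p`
and `p ≤ l`) and `p ≡ 3 (mod 4)`. -/
theorem exists_prime_three_mod_four (l : ℕ) (hl : 7 ≤ l) :
    ∃ p : ℕ, p.Prime ∧ l + 1 < 2 * p ∧ p ≤ l ∧ p % 4 = 3 := by
  rcases le_or_gt 1000000 l with h | h
  -- Applying the estimate to `l` gives only `l + 1 ≤ 2 * p`, and applying it to `l + 1` gives only
  -- `p ≤ l + 1`. Equality is impossible in the former if `l` is even, and in the latter if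
  -- `l + 1` is not `3` mod 4.
  · by_cases h4 : (l + 1) % 4 = 3
    · obtain ⟨p, hp, h3, h1, h2⟩ := exists_prime_of_large h
      exact ⟨p, hp, by omega, h1, h3⟩
    · obtain ⟨p, hp, h3, h1, h2⟩ := exists_prime_of_large (n := l + 1) (by omega)
      have : p ≠ l + 1 := by rintro rfl; exact h4 h3
      exact ⟨p, hp, h2, by omega, h3⟩
  · have step (p : ℕ) (hp : p.Prime) (h3 : p % 4 = 3) (h1 : p ≤ l) (h2 : l < 2 * p - 1) :
        ∃ p : ℕ, p.Prime ∧ l + 1 < 2 * p ∧ p ≤ l ∧ p % 4 = 3 := ⟨p, hp, by omega, h1, h3⟩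
    rcases lt_or_ge l 13 with h' | h'
    · exact step 7 (by norm_num) rfl (by omega) (by omega)
    rcases lt_or_ge l 21 with h' | h'
    · exact step 11 (by norm_num) rfl (by omega) (by omega)
    rcases lt_or_ge l 37 with h' | h'
    · exact step 19 (by norm_num) rfl (by omega) (by omega)
    rcases lt_or_ge l 61 with h' | h'
    · exact step 31 (by norm_num) rfl (by omega) (by omega)
    rcases lt_or_ge l 117 with h' | h'
    · exact step 59 (by norm_num) rfl (by omega) (by omega)
    rcases lt_or_ge l 213 with h' | h'
    · exact step 107 (by norm_num) rfl (by omega) (by omega)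
    rcases lt_or_ge l 421 with h' | h'
    · exact step 211 (by norm_num) rfl (by omega) (by omega)
    rcases lt_or_ge l 837 with h' | h'
    · exact step 419 (by norm_num) rfl (by omega) (by omega)
    rcases lt_or_ge l 1653 with h' | h'
    · exact step 827 (by norm_num) rfl (by omega) (by omega)
    rcases lt_or_ge l 3253 with h' | h'
    · exact step 1627 (by norm_num) rfl (by omega) (by omega)
    rcases lt_or_ge l 6501 with h' | h'
    · exact step 3251 (by norm_num) rfl (by omega) (by omega)
    rcases lt_or_ge l 12981 with h' | h'
    · exact step 6491 (by norm_num) rfl (by omega) (by omega)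
    rcases lt_or_ge l 25957 with h' | h'
    · exact step 12979 (by norm_num) rfl (by omega) (by omega)
    rcases lt_or_ge l 51901 with h' | h'
    · exact step 25951 (by norm_num) rfl (by omega) (by omega)
    rcases lt_or_ge l 103797 with h' | h'
    · exact step 51899 (by norm_num) rfl (by omega) (by omega)
    rcases lt_or_ge l 207573 with h' | h'
    · exact step 103787 (by norm_num) rfl (by omega) (by omega)
    rcases lt_or_ge l 415125 with h' | h'
    · exact step 207563 (by norm_num) rfl (by omega) (by omega)
    rcases lt_or_ge l 830221 with h' | h'
    · exact step 415111 (by norm_num) rfl (by omega) (by omega)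
    rcases lt_or_ge l 1660381 with h' | h'
    · exact step 830191 (by norm_num) rfl (by omega) (by omega)
    omega
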